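/- arXiv:0809.2185 — 7 statements merged into one kernel-verified Lean document; each statement's English description precedes it below -/
import Mathlib

section
/- Let F, G : ℝ → ℝ be twice differentiable and let κ, λ, μ be real constants such that for all x: F''(x) = −2κF(x)³ + μF(x) and (F'(x))² = −κF(x)⁴ + μF(x)² + λ, and for all t: G''(t) = −2λG(t)³ + (μ−1)G(t) and (G'(t))² = −λG(t)⁴ + (μ−1)G(t)² + κ. Then the function φ(x,t) = 4·arctan(F(x)·G(t)) satisfies the sine-Gordon equation ∂²φ/∂t² − ∂²φ/∂x² + sin φ = 0 at every point (x,t). -/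
/-!
Write `u = F x * G t`. Then `∂ₜ²(4 arctan u) = 4 uₜₜ / (1 + u²) - 8 u uₜ² / (1 + u²)²`, likewise in
`x`, and `sin (4 arctan u) = 4 u (1 - u²) / (1 + u²)²`, so the sine-Gordon equation is equivalent to
`(1 + u²) (uₜₜ - uₓₓ) - 2 u (uₜ² - uₓ²) + u (1 - u²) = 0`. The second-order equations give
`uₜₜ - uₓₓ = u (2 w - 1)` and the first-order ones give `uₜ² - uₓ² = (1 + u²) w - u²`, with
`w = κ F² - lam G²`; substituting, everything cancels.
-/

/-- The common form of the `t`- and `x`-second derivatives of `4 arctan (F x * G t)`: one factor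
is the constant `c`, the other the function `h`. -/
lemma deriv_deriv_four_arctan (h : ℝ → ℝ) (hh : Differentiable ℝ h)
    (hh' : Differentiable ℝ (deriv h)) (c y : ℝ) :
    deriv (deriv (fun s => 4 * Real.arctan (c * h s))) y
      = 4 * (c * deriv (deriv h) y) / (1 + (c * h y) ^ 2)
        - 8 * (c * h y) * (c * deriv h y) ^ 2 / (1 + (c * h y) ^ 2) ^ 2 := by
  have h1 : deriv (fun s => 4 * Real.arctan (c * h s))
      = fun s => 4 * (c * deriv h s) / (1 + (c * h s) ^ 2) := by
    funext s
    rw [((((hh s).hasDerivAt.const_mul c).arctan).const_mul 4).deriv]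
    ring
  have hne : 1 + (c * h y) ^ 2 ≠ 0 := by positivity
  have hnum := ((hh' y).hasDerivAt.const_mul c).const_mul 4
  have hden := (((hh y).hasDerivAt.const_mul c).pow 2).const_add 1
  rw [h1]
  refine (hnum.div hden hne).deriv.trans ?_
  simp only [Pi.pow_apply]
  field_simp
  ring

lemma sin_four_arctan (u : ℝ) :
    Real.sin (4 * Real.arctan u) = 4 * u * (1 - u ^ 2) / (1 + u ^ 2) ^ 2 := by
  have hc : Real.cos (Real.arctan u) ^ 2 = 1 / (1 + u ^ 2) := Real.cos_sq_arctan u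
  have hs : Real.sin (Real.arctan u) = u * Real.cos (Real.arctan u) := by
    rw [Real.sin_arctan, Real.cos_arctan]
    ring
  have hne : 1 + u ^ 2 ≠ 0 := by positivity
  rw [show 4 * Real.arctan u = 2 * (2 * Real.arctan u) by ring, Real.sin_two_mul,
    Real.sin_two_mul, Real.cos_two_mul, hs]
  calc _ = 4 * u * Real.cos (Real.arctan u) ^ 2 * (2 * Real.cos (Real.arctan u) ^ 2 - 1) := by ring
    _ = _ := by
      rw [hc]
      field_simp
      ring

/-- Separable solutions of the sine-Gordon equation: if `F` and `G` satisfy the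
quartic first-order ODEs and their differentiated second-order forms, then
`φ(x,t) = 4 * arctan (F x * G t)` satisfies `∂²φ/∂t² − ∂²φ/∂x² + sin φ = 0`. -/
theorem sineGordon_separable_solution
    (F G : ℝ → ℝ) (κ lam μ : ℝ)
    (hF : Differentiable ℝ F) (hF' : Differentiable ℝ (deriv F))
    (hG : Differentiable ℝ G) (hG' : Differentiable ℝ (deriv G))
    (hF2 : ∀ x, deriv (deriv F) x = -2 * κ * (F x) ^ 3 + μ * F x)
    (hF1 : ∀ x, (deriv F x) ^ 2 = -κ * (F x) ^ 4 + μ * (F x) ^ 2 + lam)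
    (hG2 : ∀ t, deriv (deriv G) t = -2 * lam * (G t) ^ 3 + (μ - 1) * G t)
    (hG1 : ∀ t, (deriv G t) ^ 2 = -lam * (G t) ^ 4 + (μ - 1) * (G t) ^ 2 + κ) :
    ∀ x t : ℝ,
      deriv (deriv (fun t' => 4 * Real.arctan (F x * G t'))) t
        - deriv (deriv (fun x' => 4 * Real.arctan (F x' * G t))) x
        + Real.sin (4 * Real.arctan (F x * G t)) = 0 := by
  intro x t
  have hx : (fun x' => 4 * Real.arctan (F x' * G t))
      = fun x' => 4 * Real.arctan (G t * F x') := by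
    funext x'
    rw [mul_comm (F x')]
  rw [hx, deriv_deriv_four_arctan G hG hG', deriv_deriv_four_arctan F hF hF', sin_four_arctan,
    mul_comm (G t) (F x), mul_pow (F x) (deriv G t), mul_pow (G t) (deriv F x),
    hF1, hG1, hF2, hG2]
  have hne : 1 + (F x * G t) ^ 2 ≠ 0 := by positivity
  field_simp
  ring
end

section
/- Let A > 0 and β > 0 be real numbers such that Ω² := β² + (1−A²)/(1+A²) > 0, and define k_f² = A²/(1+A²) + A²/(β²(1+A²)²) and k_g² = A²/(1+A²) − A²/(Ω²(1+A²)²). Suppose f, g : ℝ → ℝ are twice differentiable with (f')² = (1−f²)(1−k_f² + k_f²f²) and f'' = (2k_f²−1)f − 2k_f²f³, and likewise (g')² = (1−g²)(1−k_g² + k_g²g²) and g'' = (2k_g²−1)g − 2k_g²g³. Then for any constants z₀ and φ, the function θ(z,τ) = π/2 − φ + 4·arctan(A·f(β(z−z₀))·g(Ωτ)) satisfies ∂²θ/∂τ² = ∂²θ/∂z² + cos(θ + φ) at every point (z,τ). -/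
/-!
Write `θ = π/2 - φ + 4 arctan w` with `w = A F G`, `F = f (β (z - z₀))`, `G = g (Ω τ)`. Since
`cos (θ + φ) = -sin (4 arctan w) = -4 w (1 - w²) / (1 + w²)²` (`cos_pi_div_two_add_four_arctan`) and
`θ'' = 4 w'' / (1 + w²) - 8 w w'² / (1 + w²)²` in either variable (`deriv_deriv_four_arctan`), the
equation becomes
`(1 + w²) (w_ττ - w_zz) - 2 w (w_τ² - w_z²) = -w (1 - w²)`.
The elliptic equations turn this into a polynomial identity in `F` and `G`, whose coefficients vanish
exactly by three relations between `A, β, Ω` and the moduli: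
`Ω² (2 k_g² - 1) - β² (2 k_f² - 1) = -1`, `β² k_f² = A² Ω² (1 - k_g²)`, `Ω² k_g² = A² β² (1 - k_f²)`.
-/

theorem deriv_deriv_four_arctan_s1 (C : ℝ) (w w1 : ℝ → ℝ) (w2 x : ℝ)
    (h1 : ∀ y, HasDerivAt w (w1 y) y) (h2 : HasDerivAt w1 w2 x) :
    deriv (deriv (fun y => C + 4 * Real.arctan (w y))) x
      = 4 * w2 / (1 + w x ^ 2) - 8 * w x * w1 x ^ 2 / (1 + w x ^ 2) ^ 2 := by
  have hd : deriv (fun y => C + 4 * Real.arctan (w y)) = fun y => 4 * (w1 y / (1 + w y ^ 2)) := by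
    funext y
    rw [(((h1 y).arctan.const_mul 4).const_add C).deriv]
    ring
  have hne : 1 + w x ^ 2 ≠ 0 := by positivity
  rw [hd, ((h2.fun_div (((h1 x).fun_pow 2).const_add 1) hne).const_mul 4).deriv]
  field_simp
  ring

theorem cos_pi_div_two_add_four_arctan (w : ℝ) :
    Real.cos (Real.pi / 2 + 4 * Real.arctan w) = -(4 * w * (1 - w ^ 2)) / (1 + w ^ 2) ^ 2 := by
  have hne : 1 + w ^ 2 ≠ 0 := by positivity
  have hc : Real.cos (Real.arctan w) ^ 2 = 1 / (1 + w ^ 2) := Real.cos_sq_arctan w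
  have hs : Real.sin (Real.arctan w) = w * Real.cos (Real.arctan w) := by
    rw [Real.sin_arctan, Real.cos_arctan]
    ring
  rw [add_comm, Real.cos_add_pi_div_two,
    show 4 * Real.arctan w = 2 * (2 * Real.arctan w) by ring, Real.sin_two_mul, Real.sin_two_mul,
    Real.cos_two_mul, hs]
  calc _ = -(4 * w * Real.cos (Real.arctan w) ^ 2 * (2 * Real.cos (Real.arctan w) ^ 2 - 1)) := by
        ring
    _ = _ := by
        rw [hc]
        field_simp
        ring

/-- Case 1a solution: with `f`, `g` cn-type Jacobi elliptic functions of moduli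
`k_f`, `k_g` determined by `A`, `β`, `Ω`, the function
`θ(z,τ) = π/2 − φ + 4 arctan (A f(β(z−z₀)) g(Ωτ))` solves the driven
sine-Gordon equation `∂²θ/∂τ² = ∂²θ/∂z² + cos(θ + φ)`. -/
theorem sineGordon_cn_cn_solution
    (A β Ω kf2 kg2 z₀ φ : ℝ)
    (hA : 0 < A) (hβ : 0 < β) (hΩpos : 0 < Ω)
    (hΩ : Ω ^ 2 = β ^ 2 + (1 - A ^ 2) / (1 + A ^ 2))
    (hkf : kf2 = A ^ 2 / (1 + A ^ 2) + A ^ 2 / (β ^ 2 * (1 + A ^ 2) ^ 2))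
    (hkg : kg2 = A ^ 2 / (1 + A ^ 2) - A ^ 2 / (Ω ^ 2 * (1 + A ^ 2) ^ 2))
    (f g : ℝ → ℝ)
    (hf : Differentiable ℝ f) (hf' : Differentiable ℝ (deriv f))
    (hg : Differentiable ℝ g) (hg' : Differentiable ℝ (deriv g))
    (hf1 : ∀ u, (deriv f u) ^ 2 = (1 - (f u) ^ 2) * (1 - kf2 + kf2 * (f u) ^ 2))
    (hf2 : ∀ u, deriv (deriv f) u = (2 * kf2 - 1) * f u - 2 * kf2 * (f u) ^ 3)
    (hg1 : ∀ u, (deriv g u) ^ 2 = (1 - (g u) ^ 2) * (1 - kg2 + kg2 * (g u) ^ 2))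
    (hg2 : ∀ u, deriv (deriv g) u = (2 * kg2 - 1) * g u - 2 * kg2 * (g u) ^ 3) :
    ∀ z τ : ℝ,
      deriv (deriv (fun τ' =>
          Real.pi / 2 - φ + 4 * Real.arctan (A * f (β * (z - z₀)) * g (Ω * τ')))) τ
        = deriv (deriv (fun z' =>
            Real.pi / 2 - φ + 4 * Real.arctan (A * f (β * (z' - z₀)) * g (Ω * τ)))) z
          + Real.cos
              ((Real.pi / 2 - φ + 4 * Real.arctan (A * f (β * (z - z₀)) * g (Ω * τ))) + φ) := by
  intro z τ
  have hβ0 : β ≠ 0 := hβ.ne'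
  have hΩ0 : Ω ≠ 0 := hΩpos.ne'
  have hM : 1 + A ^ 2 ≠ 0 := by positivity
  -- The moduli with their denominators `β²`, `Ω²` cleared.
  have hP : β ^ 2 * kf2 = A ^ 2 * β ^ 2 / (1 + A ^ 2) + A ^ 2 / (1 + A ^ 2) ^ 2 := by
    rw [hkf]
    field_simp
  have hQ : Ω ^ 2 * kg2 = A ^ 2 * Ω ^ 2 / (1 + A ^ 2) - A ^ 2 / (1 + A ^ 2) ^ 2 := by
    rw [hkg]
    field_simp
  have e1 : Ω ^ 2 * (2 * kg2 - 1) - β ^ 2 * (2 * kf2 - 1) = -1 := by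
    have : Ω ^ 2 * (2 * kg2 - 1) - β ^ 2 * (2 * kf2 - 1)
        = 2 * (Ω ^ 2 * kg2) - Ω ^ 2 - 2 * (β ^ 2 * kf2) + β ^ 2 := by ring
    rw [this, hP, hQ, hΩ]
    field_simp
    ring
  have e2 : β ^ 2 * kf2 = A ^ 2 * (Ω ^ 2 * (1 - kg2)) := by
    rw [mul_sub, hP, hQ, hΩ]
    field_simp
    ring
  have e3 : Ω ^ 2 * kg2 = A ^ 2 * (β ^ 2 * (1 - kf2)) := by
    rw [mul_sub, hP, hQ, hΩ]
    field_simp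
    ring
  have lτ : ∀ y : ℝ, HasDerivAt (fun y => Ω * y) Ω y := fun y => by
    simpa using (hasDerivAt_id y).const_mul Ω
  have lz : ∀ y : ℝ, HasDerivAt (fun y => β * (y - z₀)) β y := fun y => by
    simpa using ((hasDerivAt_id y).sub_const z₀).const_mul β
  rw [deriv_deriv_four_arctan_s1 (Real.pi / 2 - φ) (fun τ' => A * f (β * (z - z₀)) * g (Ω * τ'))
      (fun τ' => A * f (β * (z - z₀)) * (deriv g (Ω * τ') * Ω))
      (A * f (β * (z - z₀)) * (deriv (deriv g) (Ω * τ) * Ω * Ω)) τ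
      (fun y => ((hg _).hasDerivAt.comp y (lτ y)).const_mul _)
      ((((hg' _).hasDerivAt.comp τ (lτ τ)).mul_const _).const_mul _),
    deriv_deriv_four_arctan_s1 (Real.pi / 2 - φ) (fun z' => A * f (β * (z' - z₀)) * g (Ω * τ))
      (fun z' => A * (deriv f (β * (z' - z₀)) * β) * g (Ω * τ))
      (A * (deriv (deriv f) (β * (z - z₀)) * β * β) * g (Ω * τ)) z
      (fun y => (((hf _).hasDerivAt.comp y (lz y)).const_mul _).mul_const _)
      (((((hf' _).hasDerivAt.comp z (lz z)).mul_const _).const_mul _).mul_const _),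
    show ∀ t : ℝ, Real.pi / 2 - φ + t + φ = Real.pi / 2 + t from fun t => by ring,
    cos_pi_div_two_add_four_arctan, hf2, hg2]
  have hF := hf1 (β * (z - z₀))
  have hG := hg1 (Ω * τ)
  simp only [mul_pow]
  rw [hF, hG]
  generalize f (β * (z - z₀)) = F
  generalize g (Ω * τ) = G
  have hne : 1 + A ^ 2 * F ^ 2 * G ^ 2 ≠ 0 := by positivity
  rw [← sub_eq_zero]
  -- Over the common denominator the numerator is a combination of the three relations.
  have key : ((1 + A ^ 2 * F ^ 2 * G ^ 2)
        * (A * F * (((2 * kg2 - 1) * G - 2 * kg2 * G ^ 3) * Ω * Ω)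
          - A * (((2 * kf2 - 1) * F - 2 * kf2 * F ^ 3) * β * β) * G)
      - 2 * (A * F * G)
        * (A ^ 2 * F ^ 2 * ((1 - G ^ 2) * (1 - kg2 + kg2 * G ^ 2) * Ω ^ 2)
          - A ^ 2 * ((1 - F ^ 2) * (1 - kf2 + kf2 * F ^ 2) * β ^ 2) * G ^ 2)
      + A * F * G * (1 - A ^ 2 * F ^ 2 * G ^ 2)) = 0 := by
    linear_combination A * F * G * ((1 - A ^ 2 * F ^ 2 * G ^ 2) * e1
      + 2 * F ^ 2 * e2 - 2 * G ^ 2 * e3)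
  field_simp
  linear_combination 4 * key
end

section
/- Let A ∈ (0,1) and β > 0 be real numbers, set Ω = Aβ, and define k_f² = 1 − A² + A²/(β²(1−A²)) and k_g² = 1 − 1/A² + 1/(A²β²(1−A²)). Suppose f, g : ℝ → ℝ are twice differentiable with (f')² = (1+f²)(1 + (1−k_f²)f²) and f'' = (2−k_f²)f + 2(1−k_f²)f³, and (g')² = (g²−1)(1−k_g²−g²) and g'' = (2−k_g²)g − 2g³. Then for any constants z₀ and φ, the function θ(z,τ) = π/2 − φ + 4·arctan(A·f(β(z−z₀))·g(Ωτ)) satisfies ∂²θ/∂τ² = ∂²θ/∂z² + cos(θ + φ) at every point where it is defined (i.e., everywhere). -/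
/-!
Write `u = A F G` with `F = f (β (z - z₀))` and `G = g (Ω τ)`, so that `θ + φ = π/2 + 4 arctan u`.
Two differentiations give `(4 arctan u)'' = 4 (u'' (1 + u²) - 2 u u'²) / (1 + u²)²`
(`deriv_deriv_arctan_comp`), and the double-angle formulas give
`cos (π/2 + 4 arctan u) = -4 u (1 - u²) / (1 + u²)²` (`cos_pi_div_two_add_four_mul_arctan`).
After multiplication by `(1 + u²)² / 4` the wave equation becomes
`(1 + u²) (u_ττ - u_zz) - 2 u (u_τ² - u_z²) + u (1 - u²) = 0`. The elliptic equations turn its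
left side into a polynomial in `F`, `G`, whose coefficients all vanish as soon as
`A² (1 - k_g²) = 1 - 1/(β² (1 - A²))` and `1 - k_f² = A² (1 - 1/(β² (1 - A²)))`,
which is how the moduli are chosen.
-/

theorem cos_pi_div_two_add_four_mul_arctan (u : ℝ) :
    Real.cos (Real.pi / 2 + 4 * Real.arctan u) = -(4 * u * (1 - u ^ 2)) / (1 + u ^ 2) ^ 2 := by
  have hpos : (0 : ℝ) < 1 + u ^ 2 := by positivity
  have hc : Real.cos (Real.arctan u) ^ 2 = 1 / (1 + u ^ 2) := Real.cos_sq_arctan u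
  have hs : Real.sin (Real.arctan u) = u * Real.cos (Real.arctan u) := by
    have h := Real.tan_mul_cos (Real.cos_arctan_pos u).ne'
    rw [Real.tan_arctan] at h
    exact h.symm
  have h4 : 4 * Real.arctan u = 2 * (2 * Real.arctan u) := by ring
  rw [add_comm, Real.cos_add_pi_div_two, h4, Real.sin_two_mul, Real.sin_two_mul, Real.cos_two_mul,
    hs]
  have hexp : ∀ c : ℝ, -(2 * (2 * (u * c) * c) * (2 * c ^ 2 - 1))
      = -(4 * u * c ^ 2 * (2 * c ^ 2 - 1)) := fun c => by ring
  rw [hexp, hc]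
  field_simp
  ring

/-- The second derivative of `t ↦ C + 4 arctan (c h(b t + d))`. -/
theorem deriv_deriv_arctan_comp (h : ℝ → ℝ) (hh : Differentiable ℝ h)
    (hh' : Differentiable ℝ (deriv h)) (C c b d t : ℝ) :
    deriv (deriv (fun s => C + 4 * Real.arctan (c * h (b * s + d)))) t
      = 4 * (c * b ^ 2 * deriv (deriv h) (b * t + d) * (1 + (c * h (b * t + d)) ^ 2)
          - 2 * (c * h (b * t + d)) * (c * b * deriv h (b * t + d)) ^ 2)
        / (1 + (c * h (b * t + d)) ^ 2) ^ 2 := by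
  have hlin : ∀ s, HasDerivAt (fun s => b * s + d) b s := fun s => by
    simpa using ((hasDerivAt_id s).const_mul b).add_const d
  have hu : ∀ s, HasDerivAt (fun s => c * h (b * s + d)) (c * (deriv h (b * s + d) * b)) s :=
    fun s => ((hh (b * s + d)).hasDerivAt.comp s (hlin s)).const_mul c
  have hw : HasDerivAt (fun s => deriv h (b * s + d)) (deriv (deriv h) (b * t + d) * b) t :=
    HasDerivAt.comp (h₂ := deriv h) t (hh' (b * t + d)).hasDerivAt (hlin t)
  have hv : HasDerivAt (fun s => c * (deriv h (b * s + d) * b))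
      (c * (deriv (deriv h) (b * t + d) * b * b)) t := (hw.mul_const b).const_mul c
  have h1 : deriv (fun s => C + 4 * Real.arctan (c * h (b * s + d)))
      = fun s => 4 * (c * (deriv h (b * s + d) * b)) / (1 + (c * h (b * s + d)) ^ 2) := by
    funext s
    rw [(((hu s).arctan.const_mul 4).const_add C).deriv]
    ring
  have hpos : (1 + (c * h (b * t + d)) ^ 2) ≠ 0 := by positivity
  rw [h1, ((hv.const_mul 4).fun_div (((hu t).fun_pow 2).const_add 1) hpos).deriv]
  congr 1
  push_cast
  ring


/-- Case with `f` an sc-type and `g` a dn-type Jacobi elliptic function: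
`θ(z,τ) = π/2 − φ + 4 arctan (A f(β(z−z₀)) g(Ωτ))` with `Ω = Aβ` solves the
driven sine-Gordon equation `∂²θ/∂τ² = ∂²θ/∂z² + cos(θ + φ)`. -/
theorem sineGordon_sc_dn_solution
    (A β Ω kf2 kg2 z₀ φ : ℝ)
    (hA : A ∈ Set.Ioo (0 : ℝ) 1) (hβ : 0 < β) (hΩ : Ω = A * β)
    (hkf : kf2 = 1 - A ^ 2 + A ^ 2 / (β ^ 2 * (1 - A ^ 2)))
    (hkg : kg2 = 1 - 1 / A ^ 2 + 1 / (A ^ 2 * β ^ 2 * (1 - A ^ 2)))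
    (f g : ℝ → ℝ)
    (hf : Differentiable ℝ f) (hf' : Differentiable ℝ (deriv f))
    (hg : Differentiable ℝ g) (hg' : Differentiable ℝ (deriv g))
    (hf1 : ∀ u, (deriv f u) ^ 2 = (1 + (f u) ^ 2) * (1 + (1 - kf2) * (f u) ^ 2))
    (hf2 : ∀ u, deriv (deriv f) u = (2 - kf2) * f u + 2 * (1 - kf2) * (f u) ^ 3)
    (hg1 : ∀ u, (deriv g u) ^ 2 = ((g u) ^ 2 - 1) * (1 - kg2 - (g u) ^ 2))
    (hg2 : ∀ u, deriv (deriv g) u = (2 - kg2) * g u - 2 * (g u) ^ 3) :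
    ∀ z τ : ℝ,
      deriv (deriv (fun τ' =>
          Real.pi / 2 - φ + 4 * Real.arctan (A * f (β * (z - z₀)) * g (Ω * τ')))) τ
        = deriv (deriv (fun z' =>
            Real.pi / 2 - φ + 4 * Real.arctan (A * f (β * (z' - z₀)) * g (Ω * τ)))) z
          + Real.cos
              ((Real.pi / 2 - φ + 4 * Real.arctan (A * f (β * (z - z₀)) * g (Ω * τ))) + φ) := by
  intro z τ
  obtain ⟨hA0, hA1⟩ := hA
  have hA2 : 1 - A ^ 2 ≠ 0 := by nlinarith
  have hτ : (fun τ' => Real.pi / 2 - φ + 4 * Real.arctan (A * f (β * (z - z₀)) * g (Ω * τ')))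
      = fun s => (Real.pi / 2 - φ)
        + 4 * Real.arctan ((A * f (β * (z - z₀))) * g (Ω * s + 0)) := by
    simp only [add_zero]
  have hz : (fun z' => Real.pi / 2 - φ + 4 * Real.arctan (A * f (β * (z' - z₀)) * g (Ω * τ)))
      = fun s => (Real.pi / 2 - φ)
        + 4 * Real.arctan ((A * g (Ω * τ)) * f (β * s + -(β * z₀))) := by
    funext s
    rw [show β * s + -(β * z₀) = β * (s - z₀) by ring, mul_right_comm]
  have hcos : ∀ x : ℝ, Real.pi / 2 - φ + x + φ = Real.pi / 2 + x := fun x => by ring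
  rw [hτ, hz, deriv_deriv_arctan_comp g hg hg', deriv_deriv_arctan_comp f hf hf', hcos,
    cos_pi_div_two_add_four_mul_arctan, add_zero,
    show β * z + -(β * z₀) = β * (z - z₀) by ring, hf2, hg2]
  have hF := hf1 (β * (z - z₀))
  have hG := hg1 (Ω * τ)
  generalize deriv f (β * (z - z₀)) = F' at *
  generalize deriv g (Ω * τ) = G' at *
  generalize f (β * (z - z₀)) = F at *
  generalize g (Ω * τ) = G at *
  rw [mul_right_comm A G F, ← add_div]
  congr 1
  simp only [mul_pow]
  rw [hF, hG, hΩ]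
  -- Clearing denominators leaves two relations, polynomial in `A`, `β` and the moduli.
  have e1 : β ^ 2 * A ^ 2 * (2 - kg2) = β ^ 2 * (2 - kf2) - 1 := by
    rw [hkf, hkg]; field_simp; ring
  have e2 : 1 - kf2 = A ^ 2 * (A ^ 2 * (1 - kg2)) := by
    rw [hkf, hkg]; field_simp; ring
  linear_combination (4 * A * F * G * (1 - A ^ 2 * F ^ 2 * G ^ 2)) * e1
    - 8 * A * F ^ 3 * G * β ^ 2 * e2
end

section
/- Let k ∈ (0,1) and let s, c, d : ℝ → ℝ be a Jacobi elliptic system with modulus k. Then there exists K > 0 such that c(K) = 0 and c(u) > 0 for all u ∈ [0, K). -/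
/-!
The conserved quantities `s² + c² = 1` and `d² + k² s² = 1` give `d² ≥ 1 - k² > 0`, so `d` never
vanishes, is positive, and satisfies `d ≥ d² ≥ 1 - k²`. If `c` stayed positive on `[0, ∞)`, then
`s' = c d > 0` would make `s` increasing there, so `c' = -s d ≤ -s(1) (1 - k²) < 0` on `[1, ∞)`,
and `c` would eventually become negative. Hence `c` has a zero in `[0, ∞)`; its zeros there form a
closed set, whose least element is `K`.
-/

/-- The infimum of the zeros in `[0, ∞)` is the first zero, and it is positive as `f 0 > 0`. -/
lemma exists_first_zero {f : ℝ → ℝ} (hf : Continuous f) (h0 : 0 < f 0)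
    (hz : ∃ u, 0 ≤ u ∧ f u ≤ 0) :
    ∃ K : ℝ, 0 < K ∧ f K = 0 ∧ ∀ u ∈ Set.Ico (0 : ℝ) K, 0 < f u := by
  have ivt : ∀ u, 0 ≤ u → f u ≤ 0 → ∃ v, 0 ≤ v ∧ v ≤ u ∧ f v = 0 := by
    intro u hu hfu
    obtain ⟨v, hv, hfv⟩ := intermediate_value_Icc' hu hf.continuousOn ⟨hfu, h0.le⟩
    exact ⟨v, hv.1, hv.2, hfv⟩
  let Z : Set ℝ := {u | 0 ≤ u ∧ f u = 0}
  have hZ_closed : IsClosed Z :=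
    (isClosed_le continuous_const continuous_id).inter (isClosed_eq hf continuous_const)
  have hZ_bdd : BddBelow Z := ⟨0, fun u hu => hu.1⟩
  have hZ_ne : Z.Nonempty := by
    obtain ⟨u, hu, hfu⟩ := hz
    obtain ⟨v, hv, -, hfv⟩ := ivt u hu hfu
    exact ⟨v, hv, hfv⟩
  obtain ⟨hK0, hK⟩ : sInf Z ∈ Z := hZ_closed.csInf_mem hZ_ne hZ_bdd
  refine ⟨sInf Z, lt_of_le_of_ne hK0 ?_, hK, ?_⟩
  · intro h
    rw [← h] at hK
    exact h0.ne' hK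
  · intro u hu
    by_contra! hfu
    obtain ⟨v, hv, hvu, hfv⟩ := ivt u hu.1 hfu
    have : sInf Z ≤ v := csInf_le hZ_bdd ⟨hv, hfv⟩
    linarith [hu.2]

/-- For a Jacobi elliptic system with modulus `k ∈ (0,1)`, the function `cn`
has a first positive zero `K` (the quarter period): `cn K = 0` and `cn > 0`
on `[0, K)`. -/
theorem jacobi_quarter_period_exists
    (k : ℝ) (hk : k ∈ Set.Ioo (0 : ℝ) 1) (s c d : ℝ → ℝ)
    (hs : ∀ u, HasDerivAt s (c u * d u) u)
    (hc : ∀ u, HasDerivAt c (-(s u * d u)) u)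
    (hd : ∀ u, HasDerivAt d (-(k ^ 2 * s u * c u)) u)
    (hs0 : s 0 = 0) (hc0 : c 0 = 1) (hd0 : d 0 = 1) :
    ∃ K : ℝ, 0 < K ∧ c K = 0 ∧ ∀ u ∈ Set.Ico (0 : ℝ) K, 0 < c u := by
  have hcc : Continuous c := continuous_iff_continuousAt.2 fun u => (hc u).continuousAt
  have hsc : Continuous s := continuous_iff_continuousAt.2 fun u => (hs u).continuousAt
  have hdc : Continuous d := continuous_iff_continuousAt.2 fun u => (hd u).continuousAt
  have const : ∀ g : ℝ → ℝ, (∀ u, HasDerivAt g 0 u) → ∀ u, g u = g 0 := fun g hg u =>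
    is_const_of_deriv_eq_zero (fun u => (hg u).differentiableAt) (fun u => (hg u).deriv) u 0
  have h1 : ∀ u, s u ^ 2 + c u ^ 2 = 1 := by
    intro u
    have := const (fun u => s u ^ 2 + c u ^ 2) (fun u =>
      (((hs u).pow 2).add ((hc u).pow 2)).congr_deriv (by push_cast; ring)) u
    simpa [hs0, hc0] using this
  have h2 : ∀ u, d u ^ 2 + k ^ 2 * s u ^ 2 = 1 := by
    intro u
    have := const (fun u => d u ^ 2 + k ^ 2 * s u ^ 2) (fun u =>
      (((hd u).pow 2).add (((hs u).pow 2).const_mul (k ^ 2))).congr_deriv (by push_cast; ring)) u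
    simpa [hs0, hd0] using this
  have hk2 : 0 < 1 - k ^ 2 := by nlinarith [hk.1, hk.2]
  have hd2 : ∀ u, 1 - k ^ 2 ≤ d u ^ 2 := by
    intro u
    nlinarith [h1 u, h2 u, mul_nonneg (sq_nonneg k) (sq_nonneg (c u))]
  have hdpos : ∀ u, 0 < d u := by
    intro u
    by_contra! h
    obtain ⟨v, hv⟩ := mem_range_of_exists_le_of_exists_ge hdc ⟨u, h⟩
      ⟨0, by rw [hd0]; exact zero_le_one⟩
    have := hd2 v
    rw [hv] at this
    linarith
  have hdlow : ∀ u, 1 - k ^ 2 ≤ d u := by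
    intro u
    have hle : d u ≤ 1 := by
      nlinarith [h2 u, mul_nonneg (sq_nonneg k) (sq_nonneg (s u))]
    nlinarith [hd2 u, hdpos u]
  apply exists_first_zero hcc (by rw [hc0]; exact one_pos)
  by_contra! hpos
  have hmono : StrictMonoOn s (Set.Ici 0) := by
    refine strictMonoOn_of_deriv_pos (convex_Ici 0) hsc.continuousOn fun u hu => ?_
    rw [interior_Ici] at hu
    rw [(hs u).deriv]
    exact mul_pos (hpos u (le_of_lt hu)) (hdpos u)
  have hs1 : 0 < s 1 := by
    have := hmono (a := 0) (b := 1) (by simp) (by simp) one_pos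
    rwa [hs0] at this
  set m := s 1 * (1 - k ^ 2) with hm
  have hmpos : 0 < m := mul_pos hs1 hk2
  -- A line of slope `-m` through `(1, c 1)` reaches zero at `1 + c 1 / m`.
  have hc1 : 0 < c 1 := hpos 1 zero_le_one
  have hq : 0 < c 1 / m := div_pos hc1 hmpos
  obtain ⟨v, hv, hslope⟩ := exists_hasDerivAt_eq_slope c (fun u => -(s u * d u))
    (show (1 : ℝ) < 1 + c 1 / m by linarith) hcc.continuousOn (fun u _ => hc u)
  have hsv : s 1 ≤ s v :=
    (hmono (a := 1) (b := v) (by simp) (Set.mem_Ici.2 (by linarith [hv.1])) hv.1).le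
  have hmv : m ≤ s v * d v := mul_le_mul hsv (hdlow v) hk2.le (hs1.le.trans hsv)
  rw [add_sub_cancel_left, eq_div_iff hq.ne'] at hslope
  have hqm : m * (c 1 / m) = c 1 := mul_div_cancel₀ _ hmpos.ne'
  have hend := hpos (1 + c 1 / m) (by linarith)
  nlinarith [mul_le_mul_of_nonneg_right hmv hq.le]
end

section
/- Let A ∈ (0,1), let k = √(1−A⁴), and let s, c, d : ℝ → ℝ be a Jacobi elliptic system with modulus k. Let K > 0 be the smallest positive zero of c, and suppose s(K) = 1. Then for every u ∈ ℝ and every positive integer l: ∫ from u to u + l·K of A·d(w)/(c(w)² + A²·s(w)²) dw = l·π/2. Consequently, the continuous phase θ with θ'(z) = 4Aβ·d(β(z−z₀))/(c(β(z−z₀))² + A²s(β(z−z₀))²), β = 1/(1−A²), changes by exactly 2lπ when z increases over an interval of length L with βL = lK. -/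
/-!
The integrand `F = A d / (c² + A² s²)` is formally the derivative of `arctan (A s / c)`, which jumps
at the zeros of `c`. Two facts circumvent the jumps.

* `F` is `K`-periodic. The quarter-period shift sends `(s, c, d)` to `(c/d, -A² s/d, A²/d)`, where
  `A²` is the complementary modulus (`jacobi_shift`); substituting this into `F` gives `F` back. The
  shift formula holds because both triples solve the Jacobi system with the same value at `0`, and
  solutions with values in `[-1, 1]³` are unique, the vector field being Lipschitz there
  (`jacobi_unique`).
* On `[0, K]` the rotated phase `arctan (A s / c) - π/4 = arctan ((A s - c) / (A s + c))` is a
  smooth antiderivative of `F`, because `A s + c > 0` there. It runs from `-π/4` to `π/4`, so the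
  integral of `F` over one period is `π/2` (`jacobi_quarter_integral`).

The second claim follows from the first by the substitution `w = β (z - z₀)`.
-/

/-- The Jacobi system has at most one solution with values in `[-1, 1]³` and given data at `0`. -/
lemma jacobi_unique (k : ℝ) (s c d S C D : ℝ → ℝ)
    (hs : ∀ u, HasDerivAt s (c u * d u) u)
    (hc : ∀ u, HasDerivAt c (-(s u * d u)) u)
    (hd : ∀ u, HasDerivAt d (-(k ^ 2 * s u * c u)) u)
    (hS : ∀ u, HasDerivAt S (C u * D u) u)
    (hC : ∀ u, HasDerivAt C (-(S u * D u)) u)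
    (hD : ∀ u, HasDerivAt D (-(k ^ 2 * S u * C u)) u)
    (bs : ∀ u, s u ∈ Set.Icc (-1 : ℝ) 1) (bc : ∀ u, c u ∈ Set.Icc (-1 : ℝ) 1)
    (bd : ∀ u, d u ∈ Set.Icc (-1 : ℝ) 1)
    (bS : ∀ u, S u ∈ Set.Icc (-1 : ℝ) 1) (bC : ∀ u, C u ∈ Set.Icc (-1 : ℝ) 1)
    (bD : ∀ u, D u ∈ Set.Icc (-1 : ℝ) 1)
    (h0 : s 0 = S 0) (h1 : c 0 = C 0) (h2 : d 0 = D 0) (u : ℝ) :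
    s u = S u ∧ c u = C u ∧ d u = D u := by
  let v : ℝ × ℝ × ℝ → ℝ × ℝ × ℝ :=
    fun p => (p.2.1 * p.2.2, -(p.1 * p.2.2), -(k ^ 2 * p.1 * p.2.1))
  let I : Set ℝ := Set.Icc (-1) 1
  have hv : ContDiff ℝ 1 v := by
    unfold v
    fun_prop
  obtain ⟨M, hM⟩ := hv.contDiffOn (s := I ×ˢ I ×ˢ I) |>.exists_lipschitzOnWith one_ne_zero
    ((convex_Icc _ _).prod ((convex_Icc _ _).prod (convex_Icc _ _)))
    (isCompact_Icc.prod (isCompact_Icc.prod isCompact_Icc))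
  have key : (fun t => (s t, c t, d t)) = (fun t => (S t, C t, D t)) :=
    ODE_solution_unique_univ (v := fun _ => v) (s := fun _ => I ×ˢ I ×ˢ I) (t₀ := 0)
      (fun _ => hM)
      (fun t => ⟨(hs t).prodMk ((hc t).prodMk (hd t)), bs t, bc t, bd t⟩)
      (fun t => ⟨(hS t).prodMk ((hC t).prodMk (hD t)), bS t, bC t, bD t⟩)
      (by simp [h0, h1, h2])
  have := congrFun key u
  simpa using this

/-- The two quadratic first integrals of the Jacobi system. -/
lemma jacobi_invariants (k : ℝ) (s c d : ℝ → ℝ)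
    (hs : ∀ u, HasDerivAt s (c u * d u) u)
    (hc : ∀ u, HasDerivAt c (-(s u * d u)) u)
    (hd : ∀ u, HasDerivAt d (-(k ^ 2 * s u * c u)) u)
    (hs0 : s 0 = 0) (hc0 : c 0 = 1) (hd0 : d 0 = 1) (u : ℝ) :
    s u ^ 2 + c u ^ 2 = 1 ∧ d u ^ 2 + k ^ 2 * s u ^ 2 = 1 := by
  have const : ∀ f : ℝ → ℝ, (∀ x, HasDerivAt f 0 x) → f u = f 0 := fun f hf =>
    is_const_of_deriv_eq_zero (fun x => (hf x).differentiableAt) (fun x => (hf x).deriv) u 0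
  have e1 := const (fun u => s u ^ 2 + c u ^ 2) fun x =>
    (((hs x).pow 2).add ((hc x).pow 2)).congr_deriv (by ring)
  have e2 := const (fun u => d u ^ 2 + k ^ 2 * s u ^ 2) fun x =>
    (((hd x).pow 2).add (((hs x).pow 2).const_mul (k ^ 2))).congr_deriv (by ring)
  simpa [hs0, hc0, hd0] using And.intro e1 e2

/-- `d ≥ A²` everywhere: `d² = 1 - k² s² ≥ 1 - k² = A⁴`, and `d` cannot change sign. -/
lemma jacobi_dn_ge (A k : ℝ) (hA : A ∈ Set.Ioo (0 : ℝ) 1) (hk : k ^ 2 = 1 - A ^ 4)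
    (s c d : ℝ → ℝ) (hdc : Continuous d) (hd0 : d 0 = 1)
    (h1 : ∀ u, s u ^ 2 + c u ^ 2 = 1) (h2 : ∀ u, d u ^ 2 + k ^ 2 * s u ^ 2 = 1) (u : ℝ) :
    A ^ 2 ≤ d u := by
  have hA2 : 0 < A ^ 2 := pow_pos hA.1 2
  have sq : ∀ x, A ^ 4 ≤ d x ^ 2 := fun x => by
    have := mul_nonneg (sq_nonneg k) (sq_nonneg (c x))
    nlinarith [h1 x, h2 x]
  have ne : ∀ x, d x ≠ 0 := fun x h => by
    have h' := sq x
    rw [h] at h'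
    nlinarith
  have pos : 0 < d u := by
    by_contra! hu
    obtain ⟨x, hx⟩ := mem_range_of_exists_le_of_exists_ge hdc ⟨u, hu⟩
      ⟨0, by rw [hd0]; exact zero_le_one⟩
    exact ne x hx
  exact le_of_sq_le_sq (by nlinarith [sq u]) pos.le

/-- The quarter-period shift of the Jacobi functions, with complementary modulus `A²`. -/
lemma jacobi_shift (A k : ℝ) (hA : A ∈ Set.Ioo (0 : ℝ) 1) (hk : k ^ 2 = 1 - A ^ 4)
    (s c d : ℝ → ℝ)
    (hs : ∀ u, HasDerivAt s (c u * d u) u)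
    (hc : ∀ u, HasDerivAt c (-(s u * d u)) u)
    (hd : ∀ u, HasDerivAt d (-(k ^ 2 * s u * c u)) u)
    (hs0 : s 0 = 0) (hc0 : c 0 = 1) (hd0 : d 0 = 1)
    (K : ℝ) (hcK : c K = 0) (hsK : s K = 1)
    (h1 : ∀ u, s u ^ 2 + c u ^ 2 = 1) (h2 : ∀ u, d u ^ 2 + k ^ 2 * s u ^ 2 = 1)
    (hdA : ∀ u, A ^ 2 ≤ d u) (u : ℝ) :
    s (u + K) = c u / d u ∧ c (u + K) = -(A ^ 2 * s u / d u) ∧ d (u + K) = A ^ 2 / d u := by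
  have hA2 : 0 < A ^ 2 := pow_pos hA.1 2
  have dpos : ∀ u, 0 < d u := fun u => hA2.trans_le (hdA u)
  have bnd : ∀ x : ℝ, x ^ 2 ≤ 1 → x ∈ Set.Icc (-1 : ℝ) 1 := fun x hx =>
    abs_le.mp ((sq_le_one_iff_abs_le_one x).mp hx)
  have bs : ∀ u, s u ∈ Set.Icc (-1 : ℝ) 1 := fun u => bnd _ (by nlinarith [h1 u, sq_nonneg (c u)])
  have bc : ∀ u, c u ∈ Set.Icc (-1 : ℝ) 1 := fun u => bnd _ (by nlinarith [h1 u, sq_nonneg (s u)])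
  have bd : ∀ u, d u ∈ Set.Icc (-1 : ℝ) 1 := fun u => bnd _ (by
    nlinarith [h2 u, mul_nonneg (sq_nonneg k) (sq_nonneg (s u))])
  -- `(c/d)² + (A² s/d)² = 1`, which bounds the first two shifted functions
  have inv : ∀ u, (c u / d u) ^ 2 + (-(A ^ 2 * s u / d u)) ^ 2 = 1 := fun u => by
    have := (dpos u).ne'
    field_simp
    have h2u := h2 u
    rw [hk] at h2u
    linear_combination h1 u - h2u
  refine jacobi_unique k (fun u => s (u + K)) (fun u => c (u + K)) (fun u => d (u + K))
    (fun u => c u / d u) (fun u => -(A ^ 2 * s u / d u)) (fun u => A ^ 2 / d u)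
    (fun u => (hs (u + K)).comp_add_const u K) (fun u => (hc (u + K)).comp_add_const u K)
    (fun u => (hd (u + K)).comp_add_const u K) ?_ ?_ ?_
    (fun _ => bs _) (fun _ => bc _) (fun _ => bd _) ?_ ?_ ?_ ?_ ?_ ?_ u
  · intro u
    have := (dpos u).ne'
    refine ((hc u).div (hd u) this).congr_deriv ?_
    field_simp
    have h2u := h2 u
    rw [hk] at h2u ⊢
    linear_combination (s u * (1 - A ^ 4)) * h1 u - s u * h2u
  · intro u
    have := (dpos u).ne'
    refine (((hs u).const_mul (A ^ 2)).div (hd u) this).neg.congr_deriv ?_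
    field_simp
    linear_combination (-A ^ 2 * c u) * h2 u
  · intro u
    have := (dpos u).ne'
    refine ((hasDerivAt_const u (A ^ 2)).div (hd u) this).congr_deriv ?_
    field_simp
    ring
  · exact fun u => bnd _ (by nlinarith [inv u, sq_nonneg (-(A ^ 2 * s u / d u))])
  · exact fun u => bnd _ (by nlinarith [inv u, sq_nonneg (c u / d u)])
  · exact fun u => ⟨by linarith [div_pos hA2 (dpos u)], (div_le_one (dpos u)).mpr (hdA u)⟩
  · simp [hsK, hc0, hd0]
  · simp [hcK, hs0]
  · have := h2 K
    rw [hk, hsK] at this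
    have hp := dpos K
    simp only [zero_add, hd0, div_one]
    refine (sq_eq_sq₀ hp.le hA2.le).mp ?_
    linarith

lemma phase_denom_ne_zero (A : ℝ) (hA : 0 < A) (x y : ℝ) (h : x ^ 2 + y ^ 2 = 1) :
    y ^ 2 + A ^ 2 * x ^ 2 ≠ 0 := by
  intro h0
  have e1 : y ^ 2 = 0 := by nlinarith [sq_nonneg y, sq_nonneg (A * x)]
  have e2 : A ^ 2 * x ^ 2 = 0 := by linarith
  have e3 : x ^ 2 = 0 := by simpa [hA.ne'] using e2
  linarith

/-- Over one quarter period the phase increases by `π/2`. -/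
lemma jacobi_quarter_integral (A : ℝ) (hA : A ∈ Set.Ioo (0 : ℝ) 1) (s c d : ℝ → ℝ)
    (hs : ∀ u, HasDerivAt s (c u * d u) u)
    (hc : ∀ u, HasDerivAt c (-(s u * d u)) u)
    (hs0 : s 0 = 0) (hc0 : c 0 = 1)
    (K : ℝ) (hK : 0 < K) (hcK : c K = 0) (hKmin : ∀ u, 0 < u → u < K → c u ≠ 0)
    (h1 : ∀ u, s u ^ 2 + c u ^ 2 = 1) (dpos : ∀ u, 0 < d u)
    (hF : Continuous fun w => A * d w / (c w ^ 2 + A ^ 2 * s w ^ 2)) (hsK : s K = 1) :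
    ∫ w in (0 : ℝ)..K, A * d w / (c w ^ 2 + A ^ 2 * s w ^ 2) = Real.pi / 2 := by
  have hA0 := hA.1
  have hsc : Continuous s := continuous_iff_continuousAt.mpr fun u => (hs u).continuousAt
  have hcc : Continuous c := continuous_iff_continuousAt.mpr fun u => (hc u).continuousAt
  have cpos : ∀ u, 0 ≤ u → u < K → 0 < c u := by
    intro u hu0 huK
    by_contra! hu
    obtain ⟨x, hx, hx0⟩ := intermediate_value_Icc' hu0 hcc.continuousOn
      (show (0 : ℝ) ∈ Set.Icc (c u) (c 0) from ⟨hu, by rw [hc0]; exact zero_le_one⟩)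
    have hxne : x ≠ 0 := by
      rintro rfl
      rw [hc0] at hx0
      exact one_ne_zero hx0
    exact hKmin x (lt_of_le_of_ne hx.1 hxne.symm) (hx.2.trans_lt huK) hx0
  have smono : MonotoneOn s (Set.Icc 0 K) := by
    refine monotoneOn_of_deriv_nonneg (convex_Icc 0 K) hsc.continuousOn
      (fun x _ => (hs x).differentiableAt.differentiableWithinAt) fun x hx => ?_
    rw [interior_Icc] at hx
    rw [(hs x).deriv]
    exact (mul_pos (cpos x hx.1.le hx.2) (dpos x)).le
  have hpos : ∀ x ∈ Set.Icc 0 K, 0 < A * s x + c x := by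
    intro x hx
    rcases hx.2.eq_or_lt with rfl | hlt
    · simpa [hcK, hsK] using hA0
    · have : 0 ≤ s x := hs0 ▸ smono ⟨le_rfl, hK.le⟩ hx hx.1
      have := cpos x hx.1 hlt
      positivity
  -- unlike `arctan (A s / c)`, this antiderivative is regular at `K`, where `c` vanishes
  have hderiv : ∀ x ∈ Set.uIcc 0 K,
      HasDerivAt (fun x => Real.arctan ((A * s x - c x) / (A * s x + c x)))
        (A * d x / (c x ^ 2 + A ^ 2 * s x ^ 2)) x := by
    intro x hx
    rw [Set.uIcc_of_le hK.le] at hx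
    have hp := (hpos x hx).ne'
    have hq := phase_denom_ne_zero A hA0 (s x) (c x) (h1 x)
    refine (((((hs x).const_mul A).sub (hc x)).div
      (((hs x).const_mul A).add (hc x)) hp).arctan).congr_deriv ?_
    simp only [Pi.add_apply, Pi.sub_apply, Pi.div_apply]
    have hn' : 1 + ((A * s x - c x) / (A * s x + c x)) ^ 2
        = 2 * (c x ^ 2 + A ^ 2 * s x ^ 2) / (A * s x + c x) ^ 2 := by
      field_simp
      ring
    rw [hn']
    field_simp
    linear_combination (2 * A * d x) * h1 x
  rw [intervalIntegral.integral_eq_sub_of_hasDerivAt hderiv (hF.intervalIntegrable _ _)]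
  simp only [hsK, hcK, hs0, hc0, mul_one, mul_zero, sub_zero, add_zero, zero_sub, zero_add,
    div_one, div_self hA0.ne', Real.arctan_neg, Real.arctan_one]
  ring

/-- Appendix B lemma: for a Jacobi elliptic system with modulus `k = √(1−A⁴)`,
the phase integrand `A·dn/(cn² + A² sn²)` integrates to `lπ/2` over any
interval of length `l·K`; consequently the static-soliton phase
`θ' (z) = 4Aβ·dn(β(z−z₀))/(cn(β(z−z₀))² + A² sn(β(z−z₀))²)` changes by
exactly `2lπ` over any interval of length `L` with `βL = lK`. -/
theorem jacobi_phase_winding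
    (A : ℝ) (hA : A ∈ Set.Ioo (0 : ℝ) 1)
    (k : ℝ) (hk : k = Real.sqrt (1 - A ^ 4)) (s c d : ℝ → ℝ)
    (hs : ∀ u, HasDerivAt s (c u * d u) u)
    (hc : ∀ u, HasDerivAt c (-(s u * d u)) u)
    (hd : ∀ u, HasDerivAt d (-(k ^ 2 * s u * c u)) u)
    (hs0 : s 0 = 0) (hc0 : c 0 = 1) (hd0 : d 0 = 1)
    (K : ℝ) (hK : 0 < K) (hcK : c K = 0)
    (hKmin : ∀ u, 0 < u → u < K → c u ≠ 0)
    (hsK : s K = 1) :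
    (∀ u : ℝ, ∀ l : ℕ, 0 < l →
        ∫ w in u..(u + l * K), A * d w / (c w ^ 2 + A ^ 2 * s w ^ 2)
          = l * Real.pi / 2) ∧
    (∀ z₀ a L : ℝ, ∀ l : ℕ, 0 < l →
        (1 / (1 - A ^ 2)) * L = l * K →
        ∫ z in a..(a + L),
            4 * A * (1 / (1 - A ^ 2)) * d ((1 / (1 - A ^ 2)) * (z - z₀))
              / (c ((1 / (1 - A ^ 2)) * (z - z₀)) ^ 2
                  + A ^ 2 * s ((1 / (1 - A ^ 2)) * (z - z₀)) ^ 2)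
          = 2 * l * Real.pi) := by
  have hA0 := hA.1
  have hk2 : k ^ 2 = 1 - A ^ 4 := by
    rw [hk, Real.sq_sqrt]
    exact sub_nonneg.mpr (pow_le_one₀ hA.1.le hA.2.le)
  have h1 u := (jacobi_invariants k s c d hs hc hd hs0 hc0 hd0 u).1
  have h2 u := (jacobi_invariants k s c d hs hc hd hs0 hc0 hd0 u).2
  have hsc : Continuous s := continuous_iff_continuousAt.mpr fun u => (hs u).continuousAt
  have hcc : Continuous c := continuous_iff_continuousAt.mpr fun u => (hc u).continuousAt
  have hdc : Continuous d := continuous_iff_continuousAt.mpr fun u => (hd u).continuousAt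
  have hdA := jacobi_dn_ge A k hA hk2 s c d hdc hd0 h1 h2
  have dpos : ∀ u, 0 < d u := fun u => (pow_pos hA0 2).trans_le (hdA u)
  have hq x := phase_denom_ne_zero A hA0 (s x) (c x) (h1 x)
  let F : ℝ → ℝ := fun w => A * d w / (c w ^ 2 + A ^ 2 * s w ^ 2)
  have hF : Continuous F := Continuous.div (by fun_prop) (by fun_prop) hq
  have hper : Function.Periodic F K := by
    intro u
    obtain ⟨e1, e2, e3⟩ := jacobi_shift A k hA hk2 s c d hs hc hd hs0 hc0 hd0 K hcK hsK h1 h2 hdA u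
    have hdu := (dpos u).ne'
    have hqu := hq u
    have hden : (-(A ^ 2 * s u / d u)) ^ 2 + A ^ 2 * (c u / d u) ^ 2
        = A ^ 2 * (c u ^ 2 + A ^ 2 * s u ^ 2) / d u ^ 2 := by
      field_simp
      ring
    simp only [F]
    rw [e1, e2, e3, hden]
    field_simp
  have hquarter : ∫ w in (0 : ℝ)..K, F w = Real.pi / 2 :=
    jacobi_quarter_integral A hA s c d hs hc hs0 hc0 K hK hcK hKmin h1 dpos hF hsK
  have main : ∀ u : ℝ, ∀ l : ℕ, ∫ w in u..(u + l * K), F w = l * Real.pi / 2 := by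
    intro u l
    have h := hper.intervalIntegral_add_zsmul_eq l u fun _ _ => hF.intervalIntegrable _ _
    rw [hper.intervalIntegral_add_eq u 0, zero_add, hquarter] at h
    simp only [zsmul_eq_mul, Int.cast_natCast] at h
    rw [h]
    ring
  refine ⟨fun u l _ => main u l, fun z₀ a L l _ hL => ?_⟩
  set β := 1 / (1 - A ^ 2)
  have hsub := intervalIntegral.mul_integral_comp_mul_sub (a := a) (b := a + L) (f := F) β (β * z₀)
  rw [show β * (a + L) - β * z₀ = (β * a - β * z₀) + l * K by rw [← hL]; ring, main] at hsub
  calc _ = ∫ z in a..(a + L), (4 * β) * F (β * z - β * z₀) := by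
        refine intervalIntegral.integral_congr fun z _ => ?_
        simp only [F, mul_sub]
        ring
    _ = 2 * l * Real.pi := by
        rw [intervalIntegral.integral_const_mul, mul_assoc, hsub]
        ring
end

section
/- Define K(k) = ∫ from 0 to 1 of dt/√((1−t²)(1−k²t²)) for k ∈ [0,1). Then for every L > 0 there exists A ∈ (0,1) such that (1 − A²)·K(√(1 − A⁴)) = L. -/
/-!
Put `F A = (1 - A²) K(√(1 - A⁴))` on `(0, 1]`. Since `F 1 = 0`, the intermediate value theorem on
some `[a, 1]` gives the result once `F` is continuous there and `L ≤ F a`.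

With `k² = 1 - A⁴` the second factor under the root is `1 - k²t² = (1 - t²) + A⁴t² ≥ A⁴`, so for
`A ≥ a` the integrand is at most `(1 - t)^(-1/2) / a²`, which is integrable; continuity follows by
dominated convergence (`continuousOn_kernel_integral`). The same factor is also at least `1 - t²`
and at most `2(1 - t) + A⁴`, so `K(√(1 - A⁴)) ≥ ∫₀¹ dt / (2(1 - t) + A⁴) = ½ log((2 + A⁴) / A⁴)`
(`log_le_kernel_integral`), which is unbounded as `A → 0`.
-/

/-- The complete elliptic integral of the first kind. -/
noncomputable def ellipticK (k : ℝ) : ℝ :=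
  ∫ t in (0 : ℝ)..1, 1 / Real.sqrt ((1 - t ^ 2) * (1 - k ^ 2 * t ^ 2))

/-- The integrand of `K(√(1 - A⁴))`, with the square of the modulus simplified to `1 - A⁴`. -/
noncomputable def ellipticKernel (A t : ℝ) : ℝ :=
  1 / Real.sqrt ((1 - t ^ 2) * (1 - (1 - A ^ 4) * t ^ 2))

lemma ellipticK_eq {A : ℝ} (h0 : 0 ≤ A) (h1 : A ≤ 1) :
    ellipticK (Real.sqrt (1 - A ^ 4)) = ∫ t in (0 : ℝ)..1, ellipticKernel A t := by
  have h : 0 ≤ 1 - A ^ 4 := sub_nonneg.2 (pow_le_one₀ h0 h1)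
  simp only [ellipticK, ellipticKernel, Real.sq_sqrt h]

lemma pow_four_le_factor {A t : ℝ} (h0 : 0 ≤ A) (h1 : A ≤ 1) (ht0 : 0 ≤ t) (ht1 : t ≤ 1) :
    A ^ 4 ≤ 1 - (1 - A ^ 4) * t ^ 2 := by
  have h : 0 ≤ 1 - A ^ 4 := sub_nonneg.2 (pow_le_one₀ h0 h1)
  have h2 : 0 ≤ 1 - t ^ 2 := sub_nonneg.2 (pow_le_one₀ ht0 ht1)
  nlinarith [mul_nonneg h h2]

/-- The integrable majorant, uniform in `A ∈ [a, 1]`. At `t = 1` both sides are zero because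
division by zero gives zero. -/
lemma ellipticKernel_le {a A t : ℝ} (ha : 0 < a) (hA : a ≤ A) (h1 : A ≤ 1)
    (ht0 : 0 ≤ t) (ht1 : t ≤ 1) :
    ellipticKernel A t ≤ 1 / Real.sqrt (1 - t) * (1 / a ^ 2) := by
  rcases ht1.eq_or_lt with rfl | ht
  · simp [ellipticKernel]
  have hf := pow_four_le_factor (ha.le.trans hA) h1 ht0 ht1
  have haA : a ^ 4 ≤ A ^ 4 := by gcongr
  have hpos : 0 < Real.sqrt (1 - t) := Real.sqrt_pos.2 (by linarith)
  have hsq : Real.sqrt (a ^ 4) = a ^ 2 := by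
    rw [show a ^ 4 = (a ^ 2) ^ 2 by ring, Real.sqrt_sq (by positivity)]
  rw [ellipticKernel, one_div_mul_one_div, ← hsq, ← Real.sqrt_mul (by linarith)]
  apply one_div_le_one_div_of_le
  · apply Real.sqrt_pos.2
    have : 0 < 1 - t := by linarith
    positivity
  · apply Real.sqrt_le_sqrt
    apply mul_le_mul _ (haA.trans hf) (by positivity) <;> nlinarith

lemma intervalIntegrable_one_div_sqrt :
    IntervalIntegrable (fun t : ℝ => 1 / Real.sqrt (1 - t)) MeasureTheory.volume 0 1 := by
  have h : IntervalIntegrable (fun t : ℝ => t ^ (-(1 / 2) : ℝ)) MeasureTheory.volume 0 1 :=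
    intervalIntegral.intervalIntegrable_rpow' (by norm_num)
  have h2 := (h.comp_sub_left 1).symm
  simp only [sub_zero, sub_self] at h2
  refine h2.congr ?_
  intro t ht
  rw [Set.uIoc_of_le zero_le_one] at ht
  simp only
  rw [Real.rpow_neg (by linarith [ht.2]), ← Real.sqrt_eq_rpow, one_div]

lemma measurable_ellipticKernel (A : ℝ) : Measurable (ellipticKernel A) := by
  unfold ellipticKernel
  fun_prop

lemma ellipticKernel_nonneg (A t : ℝ) : 0 ≤ ellipticKernel A t := by
  unfold ellipticKernel
  positivity

lemma intervalIntegrable_ellipticKernel {A : ℝ} (h0 : 0 < A) (h1 : A ≤ 1) :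
    IntervalIntegrable (ellipticKernel A) MeasureTheory.volume 0 1 := by
  refine (intervalIntegrable_one_div_sqrt.mul_const (1 / A ^ 2)).mono_fun'
    (measurable_ellipticKernel A).aestronglyMeasurable ?_
  refine (MeasureTheory.ae_restrict_iff' measurableSet_uIoc).2 (.of_forall fun t ht => ?_)
  rw [Set.uIoc_of_le zero_le_one] at ht
  beta_reduce
  rw [Real.norm_of_nonneg (ellipticKernel_nonneg A t)]
  exact ellipticKernel_le h0 le_rfl h1 ht.1.le ht.2

lemma continuousOn_kernel_integral {a : ℝ} (ha : 0 < a) :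
    ContinuousOn (fun A => ∫ t in (0 : ℝ)..1, ellipticKernel A t) (Set.Icc a 1) := by
  intro A₀ hA₀
  refine intervalIntegral.continuousWithinAt_of_dominated_interval
    (bound := fun t => 1 / Real.sqrt (1 - t) * (1 / a ^ 2)) ?_ ?_
    (intervalIntegrable_one_div_sqrt.mul_const _) ?_
  · exact .of_forall fun A => (measurable_ellipticKernel A).aestronglyMeasurable
  · filter_upwards [self_mem_nhdsWithin] with A hA
    refine .of_forall fun t ht => ?_
    rw [Set.uIoc_of_le zero_le_one] at ht
    rw [Real.norm_of_nonneg (ellipticKernel_nonneg A t)]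
    exact ellipticKernel_le ha hA.1 hA.2 ht.1.le ht.2
  · refine .of_forall fun t ht => ?_
    rw [Set.uIoc_of_le zero_le_one] at ht
    apply ContinuousAt.continuousWithinAt
    rcases ht.2.eq_or_lt with rfl | ht1
    -- At `t = 1` the kernel is the constant `1 / √0 = 0`.
    · simp only [ellipticKernel, one_pow, sub_self, zero_mul, Real.sqrt_zero, div_zero]
      exact continuousAt_const
    · have hA : 0 < A₀ := ha.trans_le hA₀.1
      have hf := pow_four_le_factor hA.le hA₀.2 ht.1.le ht.2
      have hp : 0 < 1 - (1 - A₀ ^ 4) * t ^ 2 := lt_of_lt_of_le (by positivity) hf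
      have hq : 0 < 1 - t ^ 2 := by nlinarith [ht.1]
      unfold ellipticKernel
      refine ContinuousAt.div₀ continuousAt_const ?_ (Real.sqrt_pos.2 (mul_pos hq hp)).ne'
      fun_prop

/-- The logarithmic divergence of `K(√(1 - A⁴))` as `A → 0`. -/
lemma log_le_kernel_integral {A : ℝ} (h0 : 0 < A) (h1 : A ≤ 1) :
    1 / 2 * Real.log ((2 + A ^ 4) / A ^ 4) ≤ ∫ t in (0 : ℝ)..1, ellipticKernel A t := by
  have hA4 : 0 < A ^ 4 := by positivity
  have hpos : ∀ t ∈ Set.Icc (0 : ℝ) 1, 0 < 2 * (1 - t) + A ^ 4 := fun t ht => by linarith [ht.2]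
  have hcont : ContinuousOn (fun t : ℝ => 1 / (2 * (1 - t) + A ^ 4)) (Set.uIcc 0 1) := by
    rw [Set.uIcc_of_le zero_le_one]
    exact ContinuousOn.div₀ (by fun_prop) (by fun_prop) fun t ht => (hpos t ht).ne'
  have hint : ∫ t in (0 : ℝ)..1, 1 / (2 * (1 - t) + A ^ 4)
      = 1 / 2 * Real.log ((2 + A ^ 4) / A ^ 4) := by
    rw [intervalIntegral.integral_eq_sub_of_hasDerivAt
      (f := fun t => -(1 / 2) * Real.log (2 * (1 - t) + A ^ 4)) ?_ hcont.intervalIntegrable]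
    · rw [Real.log_div (by positivity) hA4.ne']
      norm_num
      ring
    · intro t ht
      rw [Set.uIcc_of_le zero_le_one] at ht
      have hd : HasDerivAt (fun t : ℝ => 2 * (1 - t) + A ^ 4) (2 * (-1)) t :=
        (((hasDerivAt_id t).const_sub 1).const_mul 2).add_const _
      refine ((hd.log (hpos t ht).ne').const_mul (-(1 / 2))).congr_deriv ?_
      ring
  rw [← hint]
  refine intervalIntegral.integral_mono_on_of_le_Ioo zero_le_one hcont.intervalIntegrable
    (intervalIntegrable_ellipticKernel h0 h1) fun t ht => ?_
  have hf := pow_four_le_factor h0.le h1 ht.1.le ht.2.le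
  have hq : 0 < 1 - t ^ 2 := by nlinarith [ht.1, ht.2]
  have hp : 0 < 1 - (1 - A ^ 4) * t ^ 2 := hA4.trans_le hf
  have hle : 1 - t ^ 2 ≤ 1 - (1 - A ^ 4) * t ^ 2 := by nlinarith [mul_nonneg hA4.le (sq_nonneg t)]
  have hle2 : 1 - (1 - A ^ 4) * t ^ 2 ≤ 2 * (1 - t) + A ^ 4 := by
    nlinarith [mul_pos hA4 hq, sq_nonneg (1 - t)]
  refine one_div_le_one_div_of_le (Real.sqrt_pos.2 (mul_pos hq hp)) ?_
  calc Real.sqrt ((1 - t ^ 2) * (1 - (1 - A ^ 4) * t ^ 2))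
      ≤ Real.sqrt ((1 - (1 - A ^ 4) * t ^ 2) ^ 2) := by
        apply Real.sqrt_le_sqrt
        rw [sq (1 - (1 - A ^ 4) * t ^ 2)]
        exact mul_le_mul_of_nonneg_right hle hp.le
    _ = 1 - (1 - A ^ 4) * t ^ 2 := Real.sqrt_sq hp.le
    _ ≤ _ := hle2

/-- Existence of the threshold amplitude: for every chain length `L > 0` there
is `A ∈ (0,1)` with `(1 − A²)·K(√(1 − A⁴)) = L`. -/
theorem threshold_amplitude_exists :
    ∀ L : ℝ, 0 < L → ∃ A : ℝ, A ∈ Set.Ioo (0 : ℝ) 1 ∧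
      (1 - A ^ 2) * ellipticK (Real.sqrt (1 - A ^ 4)) = L := by
  intro L hL
  -- With `a = exp (-L) / 2`, both `1 - a² ≥ 1/2` and `log ((2 + a⁴) / a⁴) ≥ 4 L` hold.
  obtain ⟨a, ha⟩ : ∃ a, a = Real.exp (-L) / 2 := ⟨_, rfl⟩
  have ha0 : 0 < a := by rw [ha]; positivity
  have ha1 : a ≤ 1 / 2 := by
    have : Real.exp (-L) ≤ 1 := Real.exp_le_one_iff.2 (by linarith)
    linarith
  have hlog : 4 * L ≤ Real.log ((2 + a ^ 4) / a ^ 4) := by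
    rw [Real.le_log_iff_exp_le (by positivity), le_div_iff₀ (by positivity)]
    have h : Real.exp (4 * L) * a ^ 4 = 1 / 16 := by
      rw [ha, div_pow, ← Real.exp_nat_mul, ← mul_div_assoc, ← Real.exp_add]
      norm_num
    rw [h]
    have : 0 < a ^ 4 := by positivity
    linarith
  have hbig : L ≤ (1 - a ^ 2) * ∫ t in (0 : ℝ)..1, ellipticKernel a t := by
    have h := log_le_kernel_integral ha0 (by linarith)
    have h2 : 1 / 2 ≤ 1 - a ^ 2 := by nlinarith
    nlinarith
  have hcont : ContinuousOn (fun A => (1 - A ^ 2) * ∫ t in (0 : ℝ)..1, ellipticKernel A t)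
      (Set.Icc a 1) :=
    ContinuousOn.mul (by fun_prop) (continuousOn_kernel_integral ha0)
  obtain ⟨A, hA, hAL⟩ := intermediate_value_Icc' (by linarith : a ≤ 1) hcont
    (show L ∈ Set.Icc _ _ from ⟨by simpa using hL.le, hbig⟩)
  have hA0 : 0 < A := ha0.trans_le hA.1
  refine ⟨A, ⟨hA0, hA.2.lt_of_ne ?_⟩, ?_⟩
  · rintro rfl
    simp at hAL
    exact hL.ne hAL
  · rw [ellipticK_eq hA0.le hA.2]
    exact hAL
end

section
/- Define K(k) = ∫ from 0 to 1 of dt/√((1−t²)(1−k²t²)) for k ∈ [0,1). Suppose for each L > 0 a number A_L ∈ (0,1) satisfies (1 − A_L²)·K(√(1 − A_L⁴)) = L. Then lim as L → ∞ of A_L·exp(L/2) = 2; in particular A_L ≈ 2·exp(−L/2) for large L. -/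
open Filter Topology Set MeasureTheory

/-- The part of `ellipticK k` that stays bounded as `k → 1⁻`. -/
noncomputable def regularPart (k : ℝ) : ℝ :=
  ∫ t in (0 : ℝ)..1, (1 - t) / Real.sqrt ((1 - t ^ 2) * (1 - k ^ 2 * t ^ 2))

lemma hasDerivAt_singular {k t : ℝ} (hk0 : 0 < k) (hk1 : k < 1) (ht : t ∈ Ioo (0 : ℝ) 1) :
    HasDerivAt (fun t => -(1 / k) *
        Real.log (k * Real.sqrt (1 - t ^ 2) + Real.sqrt (1 - k ^ 2 * t ^ 2)))
      (t / Real.sqrt ((1 - t ^ 2) * (1 - k ^ 2 * t ^ 2))) t := by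
  obtain ⟨ht0, ht1⟩ := ht
  have h1 : 0 < 1 - t ^ 2 := by nlinarith
  have hk2 : k ^ 2 < 1 := by nlinarith
  have h2 : 0 < 1 - k ^ 2 * t ^ 2 := by nlinarith [sq_nonneg t]
  have ha := Real.sqrt_pos.2 h1
  have hb := Real.sqrt_pos.2 h2
  have d1 : HasDerivAt (fun t : ℝ => 1 - t ^ 2) (-(2 * t)) t := by
    simpa using ((hasDerivAt_pow 2 t).const_sub 1)
  have d2 : HasDerivAt (fun t : ℝ => 1 - k ^ 2 * t ^ 2) (-(k ^ 2 * (2 * t))) t := by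
    simpa using (((hasDerivAt_pow 2 t).const_mul (k ^ 2)).const_sub 1)
  have hs : 0 < k * Real.sqrt (1 - t ^ 2) + Real.sqrt (1 - k ^ 2 * t ^ 2) := by positivity
  have d := ((((d1.sqrt h1.ne').const_mul k).add (d2.sqrt h2.ne')).log hs.ne').const_mul (-(1 / k))
  refine d.congr_deriv ?_
  rw [Real.sqrt_mul h1.le]
  simp only [Pi.add_apply]
  set a := Real.sqrt (1 - t ^ 2)
  set b := Real.sqrt (1 - k ^ 2 * t ^ 2)
  field_simp
  ring

lemma continuous_singular {k : ℝ} (hk0 : 0 < k) (hk1 : k < 1) :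
    ContinuousOn (fun t => -(1 / k) *
        Real.log (k * Real.sqrt (1 - t ^ 2) + Real.sqrt (1 - k ^ 2 * t ^ 2))) (Icc 0 1) := by
  refine ContinuousOn.mul continuousOn_const (ContinuousOn.log (by fun_prop) ?_)
  rintro t ⟨ht0, ht1⟩
  have hk2 : k ^ 2 < 1 := by nlinarith
  have ht2 : t ^ 2 ≤ 1 := by nlinarith
  have h2 : 0 < 1 - k ^ 2 * t ^ 2 := by nlinarith [sq_nonneg k]
  have hb := Real.sqrt_pos.2 h2
  positivity

lemma integrable_singular {k : ℝ} (hk0 : 0 < k) (hk1 : k < 1) :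
    IntervalIntegrable (fun t => t / Real.sqrt ((1 - t ^ 2) * (1 - k ^ 2 * t ^ 2)))
      volume 0 1 := by
  rw [intervalIntegrable_iff_integrableOn_Ioc_of_le zero_le_one]
  exact intervalIntegral.integrableOn_deriv_of_nonneg (continuous_singular hk0 hk1)
    (fun t ht => hasDerivAt_singular hk0 hk1 ht)
    (fun t ht => div_nonneg ht.1.le (Real.sqrt_nonneg _))

lemma integral_singular {k : ℝ} (hk0 : 0 < k) (hk1 : k < 1) :
    ∫ t in (0 : ℝ)..1, t / Real.sqrt ((1 - t ^ 2) * (1 - k ^ 2 * t ^ 2)) =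
      (1 / k) * (Real.log (1 + k) - Real.log (Real.sqrt (1 - k ^ 2))) := by
  rw [intervalIntegral.integral_eq_sub_of_hasDerivAt_of_le zero_le_one
    (continuous_singular hk0 hk1) (fun t ht => hasDerivAt_singular hk0 hk1 ht)
    (integrable_singular hk0 hk1)]
  simp [add_comm k 1]
  ring

lemma regularPart_integrand_le {k t : ℝ} (hk0 : 0 < k) (hk1 : k < 1) (ht0 : 0 ≤ t) (ht1 : t ≤ 1) :
    (1 - t) / Real.sqrt ((1 - t ^ 2) * (1 - k ^ 2 * t ^ 2)) ≤ (1 + t)⁻¹ := by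
  rcases ht1.eq_or_lt with rfl | ht1
  · norm_num
  have h1 : 0 < 1 - t ^ 2 := by nlinarith
  have hk2 : k ^ 2 < 1 := by nlinarith
  have h2 : 1 - t ^ 2 ≤ 1 - k ^ 2 * t ^ 2 := by nlinarith [sq_nonneg t]
  have h3 : 1 - t ^ 2 ≤ Real.sqrt ((1 - t ^ 2) * (1 - k ^ 2 * t ^ 2)) := by
    apply Real.le_sqrt_of_sq_le
    nlinarith
  calc _ ≤ (1 - t) / (1 - t ^ 2) := by
        apply div_le_div_of_nonneg_left (by linarith) h1 h3
    _ = (1 + t)⁻¹ := by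
        have : 1 - t ≠ 0 := by linarith
        rw [show 1 - t ^ 2 = (1 - t) * (1 + t) by ring]
        field_simp

lemma regularPart_integrand_nonneg {k t : ℝ} (ht1 : t ≤ 1) :
    0 ≤ (1 - t) / Real.sqrt ((1 - t ^ 2) * (1 - k ^ 2 * t ^ 2)) :=
  div_nonneg (by linarith) (Real.sqrt_nonneg _)

lemma measurable_regularPart_integrand (k : ℝ) :
    Measurable (fun t : ℝ => (1 - t) / Real.sqrt ((1 - t ^ 2) * (1 - k ^ 2 * t ^ 2))) := by
  fun_prop

lemma intervalIntegrable_inv_one_add :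
    IntervalIntegrable (fun t : ℝ => (1 + t)⁻¹) volume 0 1 := by
  apply ContinuousOn.intervalIntegrable
  refine ContinuousOn.inv₀ (by fun_prop) ?_
  intro t ht
  rw [uIcc_of_le zero_le_one] at ht
  have := ht.1
  positivity

lemma integral_inv_one_add : ∫ t in (0 : ℝ)..1, (1 + t)⁻¹ = Real.log 2 := by
  rw [intervalIntegral.integral_comp_add_left (fun x => x⁻¹) 1,
    integral_inv_of_pos (by norm_num) (by norm_num)]
  norm_num

lemma integrable_regularPart {k : ℝ} (hk0 : 0 < k) (hk1 : k < 1) :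
    IntervalIntegrable (fun t => (1 - t) / Real.sqrt ((1 - t ^ 2) * (1 - k ^ 2 * t ^ 2)))
      volume 0 1 := by
  refine intervalIntegrable_inv_one_add.mono_fun'
    (measurable_regularPart_integrand k).aestronglyMeasurable ?_
  filter_upwards [ae_restrict_mem measurableSet_uIoc] with t ht
  rw [uIoc_of_le zero_le_one] at ht
  rw [Real.norm_of_nonneg (regularPart_integrand_nonneg ht.2)]
  exact regularPart_integrand_le hk0 hk1 ht.1.le ht.2

lemma regularPart_le {k : ℝ} (hk0 : 0 < k) (hk1 : k < 1) : regularPart k ≤ Real.log 2 := by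
  rw [← integral_inv_one_add]
  exact intervalIntegral.integral_mono_on zero_le_one (integrable_regularPart hk0 hk1)
    intervalIntegrable_inv_one_add
    (fun t ht => regularPart_integrand_le hk0 hk1 ht.1 ht.2)

lemma regularPart_nonneg (k : ℝ) : 0 ≤ regularPart k :=
  intervalIntegral.integral_nonneg zero_le_one (fun _ ht => regularPart_integrand_nonneg ht.2)

lemma tendsto_regularPart : Tendsto regularPart (𝓝[<] 1) (𝓝 (Real.log 2)) := by
  rw [← integral_inv_one_add]
  have hk : ∀ᶠ k : ℝ in 𝓝[<] 1, k ∈ Ioo (0 : ℝ) 1 := Ioo_mem_nhdsLT one_pos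
  refine intervalIntegral.tendsto_integral_filter_of_dominated_convergence (fun t => (1 + t)⁻¹)
    (Eventually.of_forall fun k => (measurable_regularPart_integrand k).aestronglyMeasurable)
    ?_ intervalIntegrable_inv_one_add ?_
  · filter_upwards [hk] with k hk
    refine Eventually.of_forall fun t ht => ?_
    rw [uIoc_of_le zero_le_one] at ht
    rw [Real.norm_of_nonneg (regularPart_integrand_nonneg ht.2)]
    exact regularPart_integrand_le hk.1 hk.2 ht.1.le ht.2
  · -- At `t = 1` the integrand is `0 / 0 = 0`, so this endpoint has to be discarded.
    have hne : ∀ᵐ t : ℝ, t ≠ 1 := by simp [ae_iff]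
    filter_upwards [hne] with t hne ht
    rw [uIoc_of_le zero_le_one] at ht
    have ht1 : t < 1 := lt_of_le_of_ne ht.2 hne
    have h0 := ht.1
    have h1 : 0 < 1 - t ^ 2 := by nlinarith
    have hc : ContinuousAt
        (fun k : ℝ => (1 - t) / Real.sqrt ((1 - t ^ 2) * (1 - k ^ 2 * t ^ 2))) 1 := by
      refine ContinuousAt.div continuousAt_const (by fun_prop) ?_
      have : 0 < (1 - t ^ 2) * (1 - 1 ^ 2 * t ^ 2) := by
        rw [one_pow, one_mul]
        positivity
      exact (Real.sqrt_pos.2 this).ne'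
    have hv : (1 - t) / Real.sqrt ((1 - t ^ 2) * (1 - 1 ^ 2 * t ^ 2)) = (1 + t)⁻¹ := by
      rw [one_pow, one_mul, Real.sqrt_mul_self h1.le, show 1 - t ^ 2 = (1 - t) * (1 + t) by ring]
      have : 1 - t ≠ 0 := by linarith
      field_simp
    have := hc.tendsto
    rw [hv] at this
    exact this.mono_left nhdsWithin_le_nhds

lemma ellipticK_eq_s15 {k : ℝ} (hk0 : 0 < k) (hk1 : k < 1) :
    ellipticK k = (1 / k) * (Real.log (1 + k) - Real.log (Real.sqrt (1 - k ^ 2)))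
      + regularPart k := by
  rw [← integral_singular hk0 hk1, regularPart, ellipticK,
    ← intervalIntegral.integral_add (integrable_singular hk0 hk1) (integrable_regularPart hk0 hk1)]
  congr 1
  ext t
  rw [← add_div]
  ring

lemma sqrt_one_sub_sq_mem {q : ℝ} (hq0 : 0 < q) (hq1 : q < 1) :
    0 < Real.sqrt (1 - q ^ 2) ∧ Real.sqrt (1 - q ^ 2) < 1 ∧ 1 - q ≤ Real.sqrt (1 - q ^ 2) := by
  refine ⟨Real.sqrt_pos.2 (by nlinarith), ?_, Real.le_sqrt_of_sq_le (by nlinarith)⟩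
  rw [Real.sqrt_lt' one_pos]
  nlinarith

/-- `ellipticK` in terms of the complementary modulus `q`. -/
lemma ellipticK_sqrt_eq {q : ℝ} (hq0 : 0 < q) (hq1 : q < 1) :
    (1 - q) * ellipticK (Real.sqrt (1 - q ^ 2)) =
      (1 - q) / Real.sqrt (1 - q ^ 2) * (Real.log (1 + Real.sqrt (1 - q ^ 2)) - Real.log q)
        + (1 - q) * regularPart (Real.sqrt (1 - q ^ 2)) := by
  obtain ⟨h0, h1, -⟩ := sqrt_one_sub_sq_mem hq0 hq1
  rw [ellipticK_eq_s15 h0 h1, Real.sq_sqrt (by nlinarith), sub_sub_cancel, Real.sqrt_sq hq0.le]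
  ring

/-- The upper bound `A² exp L ≤ 4` in logarithmic form, with `q = A²`. -/
lemma log_add_le {q : ℝ} (hq0 : 0 < q) (hq1 : q < 1) :
    Real.log q + (1 - q) * ellipticK (Real.sqrt (1 - q ^ 2)) ≤ 2 * Real.log 2 := by
  obtain ⟨h0, h1, h2⟩ := sqrt_one_sub_sq_mem hq0 hq1
  rw [ellipticK_sqrt_eq hq0 hq1]
  set k := Real.sqrt (1 - q ^ 2)
  have hc : (1 - q) / k ≤ 1 := (div_le_one h0).2 h2
  have hlog : Real.log (1 + k) ≤ Real.log 2 := Real.log_le_log (by linarith) (by linarith)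
  have hlog0 : 0 ≤ Real.log (1 + k) := Real.log_nonneg (by linarith)
  have hq : Real.log q ≤ 0 := Real.log_nonpos hq0.le hq1.le
  have hR := regularPart_le h0 h1
  have hR0 := regularPart_nonneg k
  nlinarith

lemma tendsto_sqrt_one_sub_sq :
    Tendsto (fun q : ℝ => Real.sqrt (1 - q ^ 2)) (𝓝[>] 0) (𝓝[<] 1) := by
  refine tendsto_nhdsWithin_iff.2 ⟨?_, ?_⟩
  · have : Continuous (fun q : ℝ => Real.sqrt (1 - q ^ 2)) := by fun_prop
    simpa using (this.tendsto 0).mono_left nhdsWithin_le_nhds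
  · filter_upwards [Ioo_mem_nhdsGT (zero_lt_one' ℝ)] with q hq
    exact (sqrt_one_sub_sq_mem hq.1 hq.2).2.1

/-- With `c = (1-q)/√(1-q²)` the coefficient of `log q` is `1 - c ∈ [0, q]`, so that term is
controlled by `q log q → 0`. -/
lemma tendsto_log_term :
    Tendsto (fun q : ℝ => (1 - (1 - q) / Real.sqrt (1 - q ^ 2)) * Real.log q)
      (𝓝[>] 0) (𝓝 0) := by
  have hlim : Tendsto (fun q : ℝ => q * Real.log q) (𝓝[>] 0) (𝓝 0) := by
    have := (Real.continuous_mul_log.tendsto 0).mono_left (nhdsWithin_le_nhds (s := Ioi 0))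
    simpa using this
  refine tendsto_of_tendsto_of_tendsto_of_le_of_le' hlim tendsto_const_nhds ?_ ?_
  all_goals
    filter_upwards [Ioo_mem_nhdsGT (zero_lt_one' ℝ)] with q hq
    obtain ⟨h0, h1, h2⟩ := sqrt_one_sub_sq_mem hq.1 hq.2
    have hlog : Real.log q ≤ 0 := Real.log_nonpos hq.1.le hq.2.le
  · have hc : 1 - q ≤ (1 - q) / Real.sqrt (1 - q ^ 2) := by
      rw [le_div_iff₀ h0]
      nlinarith [hq.2]
    exact mul_le_mul_of_nonpos_right (by linarith) hlog
  · have hc : (1 - q) / Real.sqrt (1 - q ^ 2) ≤ 1 := (div_le_one h0).2 h2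
    exact mul_nonpos_of_nonneg_of_nonpos (by linarith) hlog

/-- The classical expansion `K(k) = log (4/q) + o(1)`; the factor `1 - q` costs only `o(1)`. -/
lemma tendsto_log_add :
    Tendsto (fun q : ℝ => Real.log q + (1 - q) * ellipticK (Real.sqrt (1 - q ^ 2)))
      (𝓝[>] 0) (𝓝 (2 * Real.log 2)) := by
  have hk := tendsto_sqrt_one_sub_sq
  have hk' : Tendsto (fun q : ℝ => Real.sqrt (1 - q ^ 2)) (𝓝[>] 0) (𝓝 1) :=
    hk.mono_right nhdsWithin_le_nhds
  have hq : Tendsto (fun q : ℝ => 1 - q) (𝓝[>] 0) (𝓝 1) := by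
    have : Continuous (fun q : ℝ => 1 - q) := by fun_prop
    simpa using (this.tendsto 0).mono_left (nhdsWithin_le_nhds (s := Ioi 0))
  have hlog : Tendsto (fun q : ℝ => Real.log (1 + Real.sqrt (1 - q ^ 2))) (𝓝[>] 0)
      (𝓝 (Real.log (1 + 1))) := (hk'.const_add 1).log (by norm_num)
  have h := (tendsto_log_term.add ((hq.div hk' one_ne_zero).mul hlog)).add
    (hq.mul (tendsto_regularPart.comp hk))
  have e : 0 + 1 / 1 * Real.log (1 + 1) + 1 * Real.log 2 = 2 * Real.log 2 := by
    norm_num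
    ring
  rw [e] at h
  refine h.congr' ?_
  filter_upwards [Ioo_mem_nhdsGT (zero_lt_one' ℝ)] with q hq
  rw [ellipticK_sqrt_eq hq.1 hq.2]
  simp only [Function.comp_apply, Pi.div_apply]
  ring

/-- Asymptotics of the threshold amplitude: if `A_L ∈ (0,1)` satisfies
`(1 − A_L²)·K(√(1 − A_L⁴)) = L` for every `L > 0`, then
`A_L · exp(L/2) → 2` as `L → ∞`, i.e. `A_L ≈ 2 exp(−L/2)`. -/
theorem threshold_amplitude_asymptotics
    (A : ℝ → ℝ)
    (hA : ∀ L : ℝ, 0 < L → A L ∈ Set.Ioo (0 : ℝ) 1 ∧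
      (1 - A L ^ 2) * ellipticK (Real.sqrt (1 - A L ^ 4)) = L) :
    Filter.Tendsto (fun L => A L * Real.exp (L / 2)) Filter.atTop (nhds 2) := by
  have hq : ∀ L : ℝ, 0 < L → A L ^ 2 ∈ Ioo (0 : ℝ) 1 := fun L hL => by
    obtain ⟨⟨h0, h1⟩, -⟩ := hA L hL
    exact ⟨by positivity, by nlinarith⟩
  have hL : ∀ L : ℝ, 0 < L →
      (1 - A L ^ 2) * ellipticK (Real.sqrt (1 - (A L ^ 2) ^ 2)) = L := fun L hL => by
    rw [← pow_mul]
    exact (hA L hL).2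
  have hlim : Tendsto (fun L => A L ^ 2) atTop (𝓝[>] 0) := by
    refine tendsto_nhdsWithin_iff.2 ⟨?_, ?_⟩
    · have hexp : Tendsto (fun L : ℝ => Real.exp (2 * Real.log 2 - L)) atTop (𝓝 0) :=
        Real.tendsto_exp_atBot.comp (tendsto_atBot_add_const_left _ _ tendsto_neg_atTop_atBot)
      refine squeeze_zero' (Eventually.of_forall fun L => sq_nonneg (A L)) ?_ hexp
      filter_upwards [eventually_gt_atTop 0] with L hL0
      have h := log_add_le (hq L hL0).1 (hq L hL0).2
      rw [hL L hL0] at h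
      rw [← Real.log_le_iff_le_exp (hq L hL0).1]
      linarith
    · filter_upwards [eventually_gt_atTop 0] with L hL0
      exact (hq L hL0).1
  have h := (Real.continuous_exp.tendsto _).comp ((tendsto_log_add.comp hlim).div_const 2)
  have e : Real.exp (2 * Real.log 2 / 2) = 2 := by
    rw [mul_div_cancel_left₀ _ two_ne_zero, Real.exp_log two_pos]
  rw [e] at h
  refine h.congr' ?_
  filter_upwards [eventually_gt_atTop 0] with L hL0
  simp only [Function.comp_apply]
  rw [hL L hL0, Real.log_pow, add_div, Real.exp_add]
  congr 1
  rw [Nat.cast_ofNat, mul_div_cancel_left₀ _ two_ne_zero, Real.exp_log (hA L hL0).1.1]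
end
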